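/- Let a^i, e^i (i = 1,2,3) be degree-1 elements of Λ, da^i, de^i degree-2 elements of Λ, and α a real number. Define F^i := da^i + (1/2)ε_{ijk}a^j∧a^k, T^i := de^i + ε_{ijk}a^j∧e^k, A_+^i := a^i + α e^i, A_-^i := a^i + (α−1) e^i, dA_+^i := da^i + α·de^i, dA_-^i := da^i + (α−1)·de^i, and F_±^i := dA_±^i + (1/2)ε_{ijk}A_±^j∧A_±^k. Then F_+^i = 0 and F_-^i = 0 for all i if and only if, for all i, T^i = ((1−2α)/2)·Σ_{j,k} ε_{ijk} e^j∧e^k and F^i = (α(α−1)/2)·Σ_{j,k} ε_{ijk} e^j∧e^k. (Flatness of both connections at the boundary is equivalent to the boundary field equations for A and e.) -/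

import Mathlib

/-- The Levi-Civita symbol on `{0,1,2}` (totally antisymmetric, `ε 0 1 2 = 1`). -/
noncomputable def eps (i j k : Fin 3) : ℝ :=
  ((j : ℝ) - (i : ℝ)) * ((k : ℝ) - (i : ℝ)) * ((k : ℝ) - (j : ℝ)) / 2

open ExteriorAlgebra

/-!
Along the line `A + x • e` the curvature is the quadratic polynomial
`F + x • T + x² • ½[e ∧ e]`. It vanishes at `s` and `t`, with `s - t` invertible, exactly when it
equals `(x - s) (x - t) • ½[e ∧ e]`; comparing coefficients gives `T` and `F`.
The theorem is the case `s = α`, `t = α - 1`.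
-/

theorem add_smul_add_sq_smul_eq_zero_iff {R M : Type*} [CommRing R] [AddCommGroup M] [Module R M]
    {s t : R} (hst : IsUnit (s - t)) (u v w : M) :
    (u + s • v + s ^ 2 • w = 0 ∧ u + t • v + t ^ 2 • w = 0) ↔
      v = -(s + t) • w ∧ u = (s * t) • w := by
  constructor
  · rintro ⟨hs, ht⟩
    have hv : v = -(s + t) • w := by
      rw [← hst.smul_left_cancel]
      linear_combination (norm := module) hs - ht
    refine ⟨hv, ?_⟩
    rw [hv] at hs
    linear_combination (norm := module) hs
  · rintro ⟨rfl, rfl⟩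
    constructor <;> module

section WedgeBracket

variable {R V I : Type*} [CommRing R] [AddCommGroup V] [Module R V] [Fintype I]

/-- The bracket `[x ∧ y]ⁱ = ∑ⱼₖ cᵢⱼₖ xʲ ∧ yᵏ` of degree-1 elements with values in an algebra with
structure constants `c`, bundled as a bilinear map. -/
def wedgeBracket (c : I → I → I → R) :
    (I → V) →ₗ[R] (I → V) →ₗ[R] (I → ExteriorAlgebra R V) :=
  LinearMap.mk₂ R (fun x y i ↦ ∑ j, ∑ k, c i j k • (ι R (x j) * ι R (y k)))
    (fun x x' y ↦ by ext i; simp [add_mul, Finset.sum_add_distrib])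
    (fun r x y ↦ by ext i; simp [Finset.smul_sum, smul_comm r])
    (fun x y y' ↦ by ext i; simp [mul_add, Finset.sum_add_distrib])
    (fun r x y ↦ by ext i; simp [Finset.smul_sum, smul_comm r])

theorem wedgeBracket_apply (c : I → I → I → R) (x y : I → V) (i : I) :
    wedgeBracket c x y i = ∑ j, ∑ k, c i j k • (ι R (x j) * ι R (y k)) :=
  rfl

theorem wedgeBracket_comm {c : I → I → I → R} (hc : ∀ i j k, c i k j = -c i j k) (x y : I → V) :
    wedgeBracket c x y = wedgeBracket c y x := by
  ext i
  simp only [wedgeBracket_apply]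
  rw [Finset.sum_comm]
  refine Finset.sum_congr rfl fun j _ ↦ Finset.sum_congr rfl fun k _ ↦ ?_
  have wedge_anticomm : ι R (x k) * ι R (y j) = -(ι R (y j) * ι R (x k)) :=
    eq_neg_of_add_eq_zero_left (ι_add_mul_swap _ _)
  rw [hc, wedge_anticomm, neg_smul_neg]

/-- The covariant exterior derivative `de + [A ∧ e]` of `e` along the connection `A`, which is the
torsion when `e` is a coframe. As no differential is available on the exterior algebra, the element
`de` is an independent argument. -/
def covariantDeriv (c : I → I → I → R) (A e : I → V) (de : I → ExteriorAlgebra R V) :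
    I → ExteriorAlgebra R V :=
  de + wedgeBracket c A e

variable [Invertible (2 : R)]

/-- The curvature `dA + ½[A ∧ A]` of the connection `A`. The element `dA` is an independent
argument, as in `covariantDeriv`. -/
def curvature (c : I → I → I → R) (A : I → V) (dA : I → ExteriorAlgebra R V) :
    I → ExteriorAlgebra R V :=
  dA + (⅟2 : R) • wedgeBracket c A A

theorem curvature_add_smul {c : I → I → I → R} (hc : ∀ i j k, c i k j = -c i j k)
    (A e : I → V) (dA de : I → ExteriorAlgebra R V) (x : R) :
    curvature c (A + x • e) (dA + x • de) =
      curvature c A dA + x • covariantDeriv c A e de +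
        x ^ 2 • (⅟2 : R) • wedgeBracket c e e := by
  have cross_terms : (⅟2 : R) • (wedgeBracket c A e + wedgeBracket c e A) = wedgeBracket c A e := by
    rw [wedgeBracket_comm hc e A, ← two_smul R, invOf_smul_smul]
  simp only [curvature, covariantDeriv, map_add, map_smul, LinearMap.add_apply,
    LinearMap.smul_apply]
  linear_combination (norm := module) x • cross_terms

theorem statement7_general {c : I → I → I → R} (hc : ∀ i j k, c i k j = -c i j k)
    (A e : I → V) (dA de : I → ExteriorAlgebra R V) {s t : R} (hst : IsUnit (s - t)) :
    (curvature c (A + s • e) (dA + s • de) = 0 ∧ curvature c (A + t • e) (dA + t • de) = 0) ↔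
      covariantDeriv c A e de = -(s + t) • (⅟2 : R) • wedgeBracket c e e ∧
        curvature c A dA = (s * t) • (⅟2 : R) • wedgeBracket c e e := by
  rw [curvature_add_smul hc, curvature_add_smul hc, add_smul_add_sq_smul_eq_zero_iff hst]

end WedgeBracket

theorem eps_swap (i j k : Fin 3) : eps i k j = -eps i j k := by
  unfold eps
  ring

/-- flatness of both shifted connections `A_± = a + αe, a + (α−1)e`
is equivalent to the boundary field equations
`T^i = ((1−2α)/2)·ε_{ijk}e^j∧e^k` and `F^i = (α(α−1)/2)·ε_{ijk}e^j∧e^k`. -/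
theorem statement7 {V : Type*} [AddCommGroup V] [Module ℝ V]
    (a e : Fin 3 → V) (da de : Fin 3 → ExteriorAlgebra ℝ V)
    (hda : ∀ i, da i ∈ ⋀[ℝ]^2 V) (hde : ∀ i, de i ∈ ⋀[ℝ]^2 V) (α : ℝ)
    (F T : Fin 3 → ExteriorAlgebra ℝ V)
    (hF : ∀ i, F i = da i + (1 / 2 : ℝ) •
      ∑ j : Fin 3, ∑ k : Fin 3, eps i j k • (ι ℝ (a j) * ι ℝ (a k)))
    (hT : ∀ i, T i = de i +
      ∑ j : Fin 3, ∑ k : Fin 3, eps i j k • (ι ℝ (a j) * ι ℝ (e k)))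
    (Ap Am : Fin 3 → V)
    (hAp : ∀ i, Ap i = a i + α • e i) (hAm : ∀ i, Am i = a i + (α - 1) • e i)
    (dAp dAm : Fin 3 → ExteriorAlgebra ℝ V)
    (hdAp : ∀ i, dAp i = da i + α • de i) (hdAm : ∀ i, dAm i = da i + (α - 1) • de i)
    (Fp Fm : Fin 3 → ExteriorAlgebra ℝ V)
    (hFp : ∀ i, Fp i = dAp i + (1 / 2 : ℝ) •
      ∑ j : Fin 3, ∑ k : Fin 3, eps i j k • (ι ℝ (Ap j) * ι ℝ (Ap k)))
    (hFm : ∀ i, Fm i = dAm i + (1 / 2 : ℝ) •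
      ∑ j : Fin 3, ∑ k : Fin 3, eps i j k • (ι ℝ (Am j) * ι ℝ (Am k))) :
    ((∀ i, Fp i = 0) ∧ (∀ i, Fm i = 0)) ↔
      ∀ i, T i = ((1 - 2 * α) / 2) •
          ∑ j : Fin 3, ∑ k : Fin 3, eps i j k • (ι ℝ (e j) * ι ℝ (e k)) ∧
        F i = ((α * (α - 1)) / 2) •
          ∑ j : Fin 3, ∑ k : Fin 3, eps i j k • (ι ℝ (e j) * ι ℝ (e k)) := by
  obtain rfl : Ap = a + α • e := funext hAp
  obtain rfl : Am = a + (α - 1) • e := funext hAm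
  obtain rfl : dAp = da + α • de := funext hdAp
  obtain rfl : dAm = da + (α - 1) • de := funext hdAm
  have half_eq : (1 / 2 : ℝ) = ⅟2 := by rw [invOf_eq_inv, one_div]
  rw [half_eq] at hF hFp hFm
  obtain rfl : F = curvature eps a da := funext hF
  obtain rfl : T = covariantDeriv eps a e de := funext hT
  obtain rfl : Fp = curvature eps (a + α • e) (da + α • de) := funext hFp
  obtain rfl : Fm = curvature eps (a + (α - 1) • e) (da + (α - 1) • de) := funext hFm
  have hTcoeff : (1 - 2 * α) / 2 = -(α + (α - 1)) * ⅟2 := by rw [invOf_eq_inv]; ring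
  have hFcoeff : α * (α - 1) / 2 = α * (α - 1) * ⅟2 := by rw [invOf_eq_inv, div_eq_mul_inv]
  have hunit : IsUnit (α - (α - 1)) := by rw [sub_sub_cancel]; exact isUnit_one
  simpa only [forall_and, funext_iff, Pi.zero_apply, Pi.smul_apply, smul_smul, wedgeBracket_apply,
    hTcoeff, hFcoeff]
    using statement7_general eps_swap a e da de hunit
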